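/- arXiv:1401.6727 — 2 statements merged into one kernel-verified Lean document; each statement's English description precedes it below -/
import Mathlib

section
/- Let p be a prime and i ≤ j natural numbers, and let G = ZMod p^i × ZMod p^j. If g, h ∈ G are such that the additive subgroup generated by {g, h} is all of G and addOrderOf g ≤ addOrderOf h, then there exist an additive group automorphism σ : G ≃+ G and a natural number a with 0 ≤ a < p^j such that g = σ(1,0) + a • σ(0,1) and h = σ(0,1). -/
/-!
The order of `h` is `p ^ j`: both orders are powers of `p`, so `addOrderOf g ∣ addOrderOf h`, hence
`addOrderOf h` kills the group, which has exponent `p ^ j`. The quotient by `⟨h⟩` therefore has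
order `p ^ i`, so `p ^ i • g = c • h` for some `c`. Multiplying by `p ^ (j - i)` shows
`p ^ i ∣ c`, say `c = p ^ i * b`, so `g - b • h` is killed by `p ^ i`. Thus
`(x, y) ↦ x • (g - b • h) + y • h` is a well-defined endomorphism; it is surjective because
`g` and `h` generate, and hence bijective by finiteness.
-/

lemma pow_nsmul_eq_zero (p i j : ℕ) (hij : i ≤ j) (x : ZMod (p ^ i) × ZMod (p ^ j)) :
    p ^ j • x = 0 := by
  have h1 : ((p ^ j : ℕ) : ZMod (p ^ i)) = 0 :=
    (ZMod.natCast_eq_zero_iff _ _).2 (pow_dvd_pow p hij)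
  have h2 : ((p ^ j : ℕ) : ZMod (p ^ j)) = 0 := ZMod.natCast_self _
  ext
  · rw [Prod.smul_fst, nsmul_eq_mul, h1, zero_mul, Prod.fst_zero]
  · rw [Prod.smul_snd, nsmul_eq_mul, h2, zero_mul, Prod.snd_zero]

/-- In a generating pair, the element of larger order has order equal to the exponent `p ^ j`. -/
lemma addOrderOf_eq_of_generate (p : ℕ) (hp : p.Prime) (i j : ℕ) (hij : i ≤ j)
    (g h : ZMod (p ^ i) × ZMod (p ^ j))
    (hgen : AddSubgroup.closure {g, h} = ⊤)
    (hord : addOrderOf g ≤ addOrderOf h) : addOrderOf h = p ^ j := by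
  have hexp := pow_nsmul_eq_zero p i j hij
  obtain ⟨m, -, hm⟩ := (Nat.dvd_prime_pow hp).1 (addOrderOf_dvd_of_nsmul_eq_zero (hexp g))
  obtain ⟨n, -, hn⟩ := (Nat.dvd_prime_pow hp).1 (addOrderOf_dvd_of_nsmul_eq_zero (hexp h))
  have hdvd : addOrderOf g ∣ addOrderOf h := by
    rw [hm, hn] at hord ⊢
    exact pow_dvd_pow p ((Nat.pow_le_pow_iff_right hp.one_lt).1 hord)
  have hkill : ∀ x : ZMod (p ^ i) × ZMod (p ^ j), addOrderOf h • x = 0 := by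
    intro x
    have hle : AddSubgroup.closure {g, h} ≤
        (nsmulAddMonoidHom (α := ZMod (p ^ i) × ZMod (p ^ j)) (addOrderOf h)).ker := by
      rw [AddSubgroup.closure_le]
      rintro y (rfl | rfl)
      · exact addOrderOf_dvd_iff_nsmul_eq_zero.1 hdvd
      · exact addOrderOf_nsmul_eq_zero _
    rw [hgen] at hle
    exact hle (AddSubgroup.mem_top x)
  refine Nat.dvd_antisymm (addOrderOf_dvd_of_nsmul_eq_zero (hexp h)) ?_
  have h01 := congrArg Prod.snd (hkill (0, 1))
  rw [Prod.smul_snd, nsmul_one] at h01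
  exact (ZMod.natCast_eq_zero_iff _ _).1 h01

theorem stmt_2 (p : ℕ) (hp : p.Prime) (i j : ℕ) (hij : i ≤ j)
    (g h : ZMod (p ^ i) × ZMod (p ^ j))
    (hgen : AddSubgroup.closure {g, h} = ⊤)
    (hord : addOrderOf g ≤ addOrderOf h) :
    ∃ (σ : (ZMod (p ^ i) × ZMod (p ^ j)) ≃+ (ZMod (p ^ i) × ZMod (p ^ j))) (a : ℕ),
      a < p ^ j ∧ g = σ (1, 0) + a • σ (0, 1) ∧ h = σ (0, 1) := by
  have : NeZero p := ⟨hp.ne_zero⟩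
  have hh := addOrderOf_eq_of_generate p hp i j hij g h hgen hord
  have hpi : 0 < p ^ i := pow_pos hp.pos i
  have hpj : 0 < p ^ j := pow_pos hp.pos j
  have hhj : p ^ j • h = 0 := pow_nsmul_eq_zero p i j hij h
  have hgj : p ^ j • g = 0 := pow_nsmul_eq_zero p i j hij g
  have hindex : (AddSubgroup.zmultiples h).index = p ^ i := by
    have hc := (AddSubgroup.zmultiples h).card_mul_index
    rw [Nat.card_zmultiples, hh, Nat.card_prod, Nat.card_zmod, Nat.card_zmod,
      mul_comm (p ^ i)] at hc
    exact Nat.eq_of_mul_eq_mul_left hpj hc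
  have hmem : p ^ i • g ∈ AddSubgroup.zmultiples h := by
    have hg := (AddSubgroup.zmultiples h).nsmul_index_mem g
    rwa [hindex] at hg
  obtain ⟨c, hc⟩ := mem_multiples_iff_mem_zmultiples.2 hmem
  replace hc : c • h = p ^ i • g := hc
  have hpij : p ^ (j - i) * p ^ i = p ^ j := by rw [← pow_add, Nat.sub_add_cancel hij]
  have hdvd : p ^ i ∣ c := by
    have h0 : (p ^ (j - i) * c) • h = 0 := by
      rw [mul_nsmul', hc, ← mul_nsmul', hpij, hgj]
    have := addOrderOf_dvd_of_nsmul_eq_zero h0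
    rw [hh, ← hpij] at this
    exact Nat.dvd_of_mul_dvd_mul_left (pow_pos hp.pos _) this
  obtain ⟨b, rfl⟩ := hdvd
  have hmod : (b % p ^ j) • h = b • h := by
    have hb := mod_addOrderOf_nsmul h b
    rwa [hh] at hb
  have hk : p ^ i • (g - b • h) = 0 := by
    rw [nsmul_sub, ← mul_nsmul', hc, sub_self]
  let f₁ : ZMod (p ^ i) →+ ZMod (p ^ i) × ZMod (p ^ j) :=
    ZMod.lift (p ^ i) ⟨zmultiplesHom _ (g - b • h), by
      rw [zmultiplesHom_apply, natCast_zsmul, hk]⟩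
  let f₂ : ZMod (p ^ j) →+ ZMod (p ^ i) × ZMod (p ^ j) :=
    ZMod.lift (p ^ j) ⟨zmultiplesHom _ h, by
      rw [zmultiplesHom_apply, natCast_zsmul, hhj]⟩
  have hf₁ : f₁ 1 = g - b • h := by
    have := ZMod.lift_coe (p ^ i) ⟨zmultiplesHom _ (g - b • h), by
      rw [zmultiplesHom_apply, natCast_zsmul, hk]⟩ 1
    simpa [f₁] using this
  have hf₂ : f₂ 1 = h := by
    have := ZMod.lift_coe (p ^ j) ⟨zmultiplesHom _ h, by
      rw [zmultiplesHom_apply, natCast_zsmul, hhj]⟩ 1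
    simpa [f₂] using this
  let f := f₁.coprod f₂
  have hf10 : f (1, 0) = g - b • h := by simp [f, hf₁]
  have hf01 : f (0, 1) = h := by simp [f, hf₂]
  have hsurj : Function.Surjective f := by
    rw [← AddMonoidHom.range_eq_top, ← top_le_iff, ← hgen, AddSubgroup.closure_le]
    rintro y (rfl | rfl)
    · exact ⟨(1, 0) + b • (0, 1), by rw [map_add, map_nsmul, hf10, hf01, sub_add_cancel]⟩
    · exact ⟨(0, 1), hf01⟩
  have hbij : Function.Bijective f := ⟨Finite.injective_iff_surjective.2 hsurj, hsurj⟩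
  refine ⟨AddEquiv.ofBijective f hbij, b % p ^ j,
    Nat.mod_lt _ hpj, ?_, ?_⟩
  · rw [AddEquiv.ofBijective_apply, AddEquiv.ofBijective_apply, hf10, hf01, hmod, sub_add_cancel]
  · rw [AddEquiv.ofBijective_apply, hf01]
end

section
/- Let 𝕞 ∣ 𝕟 be positive integers, m = 𝕞², n = 𝕟², and let a, b, c be natural numbers with a, b < 𝕞 and c < 𝕟. Let π : ZMod m × ZMod n → ZMod 𝕞 × ZMod 𝕟 be componentwise reduction (via ZMod.castHom). Define F : (ZMod m × ZMod n)² → ℂ by F((x₁,x₂),(y₁,y₂)) = ζ_m^{(a·x₁.val + b·x₂.val)·(y₁.val − (y₁.val % 𝕞))} · ζ_n^{c·x₂.val·(y₂.val − (y₂.val % 𝕟))}. Then for all x, y, z ∈ ZMod m × ZMod n, F(y,z) · F(x, y+z) · F(x+y, z)⁻¹ · F(x,y)⁻¹ = ω_{a,b,c}(π x, π y, π z). In other words, the pullback of the 3-cocycle ω_{a,b,c} along π is the coboundary of the 2-cochain F, so ω_{a,b,c} becomes trivial in ZMod 𝕞² × ZMod 𝕟². -/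
/-!
The point is that `y - y % d = d * (y / d)` and `ζ_{d²} ^ d = ζ_d`, so that
`F(x, y) = ζ_𝕞 ^ ((a x₁ + b x₂) * (y₁ / 𝕞)) * ζ_𝕟 ^ (c x₂ * (y₂ / 𝕟))`.
Exponents of `ζ_d` only matter modulo `d`. Modulo `d` the coefficients `a x₁ + b x₂` and `c x₂` are
additive in `x` (for the first one this uses `𝕞 ∣ 𝕟`), while the quotient `y / d` of
`y ∈ ZMod d²` is additive up to the carry `(y % d + z % d) / d` (`quot_add_modEq`). In the
coboundary everything therefore cancels except (coefficient of `x`) times the carry, which is the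
exponent in `ω_{a,b,c}`; this cancellation is `pow_coboundary`.
-/

/-- `ζ_d = exp(2πi/d)`, the standard primitive `d`-th root of unity in `ℂ`. -/
noncomputable def stdRoot (d : ℕ) : ℂ := Complex.exp (2 * Real.pi * Complex.I / d)

/-- The 3-cocycle `ω_{a,b,c}` on `ZMod 𝕞 × ZMod 𝕟`. -/
noncomputable def omegaABC (𝕞 𝕟 a b c : ℕ) (x y z : ZMod 𝕞 × ZMod 𝕟) : ℂ :=
  stdRoot 𝕞 ^ ((a * x.1.val + b * x.2.val) * ((y.1.val + z.1.val) / 𝕞)) *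
  stdRoot 𝕟 ^ (c * x.2.val * ((y.2.val + z.2.val) / 𝕟))

/-- The 2-cochain `F` on `ZMod 𝕞² × ZMod 𝕟²` whose coboundary is the pullback of
`ω_{a,b,c}`. -/
noncomputable def twoCochainF (𝕞 𝕟 a b c : ℕ)
    (x y : ZMod (𝕞 ^ 2) × ZMod (𝕟 ^ 2)) : ℂ :=
  stdRoot (𝕞 ^ 2) ^ ((a * x.1.val + b * x.2.val) * (y.1.val - y.1.val % 𝕞)) *
  stdRoot (𝕟 ^ 2) ^ (c * x.2.val * (y.2.val - y.2.val % 𝕟))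

/-- Componentwise reduction `ZMod 𝕞² × ZMod 𝕟² → ZMod 𝕞 × ZMod 𝕟`. -/
def redPi (𝕞 𝕟 : ℕ) (x : ZMod (𝕞 ^ 2) × ZMod (𝕟 ^ 2)) : ZMod 𝕞 × ZMod 𝕟 :=
  (ZMod.castHom (dvd_pow_self 𝕞 two_ne_zero) (ZMod 𝕞) x.1,
   ZMod.castHom (dvd_pow_self 𝕟 two_ne_zero) (ZMod 𝕟) x.2)

theorem stdRoot_pow_self (d : ℕ) (hd : 0 < d) : stdRoot d ^ d = 1 :=
  (Complex.isPrimitiveRoot_exp d hd.ne').pow_eq_one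

theorem stdRoot_ne_zero (d : ℕ) : stdRoot d ≠ 0 := Complex.exp_ne_zero _

theorem stdRoot_sq_pow (d : ℕ) (hd : 0 < d) : stdRoot (d ^ 2) ^ d = stdRoot d := by
  unfold stdRoot
  have h : (d : ℂ) ≠ 0 := by exact_mod_cast hd.ne'
  rw [← Complex.exp_nat_mul]
  congr 1
  push_cast
  field_simp

theorem stdRoot_sq_pow_mul_sub_mod (d : ℕ) (hd : 0 < d) (A y : ℕ) :
    stdRoot (d ^ 2) ^ (A * (y - y % d)) = stdRoot d ^ (A * (y / d)) := by
  have h : A * (y - y % d) = d * (A * (y / d)) := by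
    have := Nat.div_add_mod y d
    rw [show y - y % d = d * (y / d) by omega]
    ring
  rw [h, pow_mul, stdRoot_sq_pow d hd]

theorem stdRoot_pow_congr {d : ℕ} (hd : 0 < d) {A B : ℕ} (h : A ≡ B [MOD d]) :
    stdRoot d ^ A = stdRoot d ^ B := by
  rw [← Nat.mod_add_div A d, ← Nat.mod_add_div B d, h, pow_add, pow_add, pow_mul, pow_mul,
    stdRoot_pow_self d hd, one_pow, one_pow]

/-- Reducing the sum modulo `d²` changes its quotient by `d` only by a multiple of `d`, so modulo
`d` the quotient is additive up to the carry of the last digits. -/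
theorem quot_add_modEq (d : ℕ) (hd : 0 < d) (y z : ZMod (d ^ 2)) :
    (y + z).val / d ≡ y.val / d + z.val / d + (y.val % d + z.val % d) / d [MOD d] := by
  have : NeZero (d ^ 2) := ⟨(pow_pos hd 2).ne'⟩
  rw [ZMod.val_add]
  generalize y.val = u, z.val = v
  rw [pow_two, Nat.mod_mul_right_div_self]
  refine (Nat.mod_modEq _ _).trans ?_
  have h : u + v = (u % d + v % d) + d * (u / d + v / d) := by
    have h1 := Nat.div_add_mod u d
    have h2 := Nat.div_add_mod v d
    linarith
  rw [h, Nat.add_mul_div_left _ _ hd, add_comm]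

theorem val_add_modEq (d e : ℕ) (he : 0 < e) (hde : d ∣ e) (x y : ZMod (e ^ 2)) :
    (x + y).val ≡ x.val + y.val [MOD d] := by
  have : NeZero (e ^ 2) := ⟨(pow_pos he 2).ne'⟩
  rw [ZMod.val_add]
  exact (Nat.mod_modEq _ _).of_dvd (hde.trans (dvd_pow_self e two_ne_zero))

theorem val_castHom_sq (d : ℕ) (hd : 0 < d) (x : ZMod (d ^ 2)) :
    (ZMod.castHom (dvd_pow_self d two_ne_zero) (ZMod d) x).val = x.val % d := by
  have : NeZero (d ^ 2) := ⟨(pow_pos hd 2).ne'⟩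
  rw [ZMod.castHom_apply, ZMod.cast_eq_val, ZMod.val_natCast]

/-- The cancellation in the coboundary for one factor of `F`: `Ax`, `Ay`, `Axy` are the coefficients
at `x`, `y`, `x + y`, and `A` is the coefficient of the reduction of `x`. -/
theorem pow_coboundary (d : ℕ) (hd : 0 < d) (y z : ZMod (d ^ 2)) {Ax Ay Axy A : ℕ}
    (hxy : Axy ≡ Ax + Ay [MOD d]) (hA : A ≡ Ax [MOD d]) :
    stdRoot d ^ (Ay * (z.val / d)) * stdRoot d ^ (Ax * ((y + z).val / d)) =
      stdRoot d ^ (A * ((y.val % d + z.val % d) / d)) *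
        (stdRoot d ^ (Axy * (z.val / d)) * stdRoot d ^ (Ax * (y.val / d))) := by
  simp only [← pow_add]
  apply stdRoot_pow_congr hd
  have h1 := (quot_add_modEq d hd y z).mul_left Ax
  have h2 := hxy.mul_right (z.val / d)
  have h3 := hA.mul_right ((y.val % d + z.val % d) / d)
  refine (h1.add_left _).trans (Nat.ModEq.trans ?_ (h3.add (h2.add_right _)).symm)
  exact congrArg (· % d) (by ring)

theorem stmt_10 (𝕞 𝕟 : ℕ) (h𝕞 : 0 < 𝕞) (h𝕟 : 0 < 𝕟) (hdvd : 𝕞 ∣ 𝕟)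
    (a b c : ℕ) (ha : a < 𝕞) (hb : b < 𝕞) (hc : c < 𝕟) :
    ∀ x y z : ZMod (𝕞 ^ 2) × ZMod (𝕟 ^ 2),
      twoCochainF 𝕞 𝕟 a b c y z * twoCochainF 𝕞 𝕟 a b c x (y + z) *
        (twoCochainF 𝕞 𝕟 a b c (x + y) z)⁻¹ * (twoCochainF 𝕞 𝕟 a b c x y)⁻¹ =
      omegaABC 𝕞 𝕟 a b c (redPi 𝕞 𝕟 x) (redPi 𝕞 𝕟 y) (redPi 𝕞 𝕟 z) := by
  intro x y z
  have hne (d k : ℕ) : stdRoot d ^ k ≠ 0 := pow_ne_zero _ (stdRoot_ne_zero d)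
  simp only [twoCochainF, omegaABC, redPi, val_castHom_sq _ h𝕞, val_castHom_sq _ h𝕟,
    stdRoot_sq_pow_mul_sub_mod _ h𝕞, stdRoot_sq_pow_mul_sub_mod _ h𝕟, Prod.fst_add, Prod.snd_add]
  have H1 := pow_coboundary 𝕞 h𝕞 y.1 z.1
    (Ax := a * x.1.val + b * x.2.val) (Ay := a * y.1.val + b * y.2.val)
    (Axy := a * (x.1 + y.1).val + b * (x.2 + y.2).val)
    (A := a * (x.1.val % 𝕞) + b * (x.2.val % 𝕟))
    ((((val_add_modEq 𝕞 𝕞 h𝕞 dvd_rfl x.1 y.1).mul_left a).add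
      ((val_add_modEq 𝕞 𝕟 h𝕟 hdvd x.2 y.2).mul_left b)).trans (congrArg (· % 𝕞) (by ring)))
    (((Nat.mod_modEq _ _).mul_left a).add (((Nat.mod_modEq _ _).of_dvd hdvd).mul_left b))
  have H2 := pow_coboundary 𝕟 h𝕟 y.2 z.2
    (Ax := c * x.2.val) (Ay := c * y.2.val) (Axy := c * (x.2 + y.2).val)
    (A := c * (x.2.val % 𝕟))
    (((val_add_modEq 𝕟 𝕟 h𝕟 dvd_rfl x.2 y.2).mul_left c).trans (congrArg (· % 𝕟) (by ring)))
    ((Nat.mod_modEq _ _).mul_left c)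
  rw [mul_inv_eq_iff_eq_mul₀ (mul_ne_zero (hne _ _) (hne _ _)),
    mul_inv_eq_iff_eq_mul₀ (mul_ne_zero (hne _ _) (hne _ _)), mul_mul_mul_comm, H1, H2]
  ac_rfl
end
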